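/- arXiv:2412.03429 — 8 statements merged into one kernel-verified Lean document; each statement's English description precedes it below -/
import Mathlib

section
/- (Theorem 1, optimality of the coherent forecast combination.) For every base-forecast vector ŷ : Fin m → ℝ, the vector ỹ := (M * Ωᵀ).mulVec ŷ is coherent, i.e. C.mulVec ỹ = 0, and it minimizes the generalized least-squares criterion among all coherent vectors: for every y : Fin n → ℝ with C.mulVec y = 0, one has (ŷ - K.mulVec ỹ) ⬝ᵥ W⁻¹.mulVec (ŷ - K.mulVec ỹ) ≤ (ŷ - K.mulVec y) ⬝ᵥ W⁻¹.mulVec (ŷ - K.mulVec y). -/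
open Matrix

/-!
The vector `ỹ` satisfies the Lagrange stationarity condition: writing `P` for the weight matrix,
`Kᴴ P (ŷ - K ỹ)` lies in the range of `Cᴴ`. Hence `P (ŷ - K ỹ)` is orthogonal to `K d` whenever
`C d = 0`, and for every coherent `y` the cross terms vanish: the criterion at `y` is the criterion
at `ỹ` plus the nonnegative value of the quadratic form `Kᴴ P K` at `ỹ - y`.
-/

section QuadraticForm

variable {R m n u : Type*} [Fintype m] [Fintype n]

lemma star_add_dotProduct_mulVec_add [NonUnitalSemiring R] [StarRing R] {P : Matrix m m R}
    (hP : P.IsHermitian) {r e : m → R} (h : star e ⬝ᵥ P *ᵥ r = 0) :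
    star (r + e) ⬝ᵥ P *ᵥ (r + e) = star r ⬝ᵥ P *ᵥ r + star e ⬝ᵥ P *ᵥ e := by
  have h' : star r ⬝ᵥ P *ᵥ e = 0 := by
    rw [dotProduct_mulVec, ← hP.eq, ← star_mulVec, star_dotProduct, h, star_zero]
  rw [mulVec_add, star_add, dotProduct_add, add_dotProduct, add_dotProduct, h, h', add_zero,
    zero_add]

lemma star_dotProduct_conjTranspose_mulVec_eq_zero [NonUnitalSemiring R] [StarRing R] [Fintype u]
    {C : Matrix u n R} {d : n → R} (hd : C *ᵥ d = 0) (μ : u → R) :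
    star d ⬝ᵥ Cᴴ *ᵥ μ = 0 := by
  rw [dotProduct_mulVec, ← star_mulVec, hd, star_zero, zero_dotProduct]

variable [NonUnitalRing R] [StarRing R]

/-- The generalized least-squares criterion `(ŷ - K y)ᴴ P (ŷ - K y)`, where the weight matrix `P`
plays the role of the inverse error covariance `W⁻¹`. -/
def glsCriterion (P : Matrix m m R) (K : Matrix m n R) (yhat : m → R) (y : n → R) : R :=
  star (yhat - K *ᵥ y) ⬝ᵥ P *ᵥ (yhat - K *ᵥ y)

lemma glsCriterion_eq_add_of_stationary [Fintype u] {P : Matrix m m R} (hP : P.IsHermitian)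
    {K : Matrix m n R} {C : Matrix u n R} {yhat : m → R} {y₀ y : n → R} {μ : u → R}
    (hμ : Kᴴ *ᵥ P *ᵥ (yhat - K *ᵥ y₀) = Cᴴ *ᵥ μ) (hy₀ : C *ᵥ y₀ = 0) (hy : C *ᵥ y = 0) :
    glsCriterion P K yhat y =
      glsCriterion P K yhat y₀ + star (y₀ - y) ⬝ᵥ (Kᴴ * P * K) *ᵥ (y₀ - y) := by
  have hd : C *ᵥ (y₀ - y) = 0 := by rw [mulVec_sub, hy₀, hy, sub_zero]
  have horth : star (K *ᵥ (y₀ - y)) ⬝ᵥ P *ᵥ (yhat - K *ᵥ y₀) = 0 := by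
    rw [star_mulVec, ← dotProduct_mulVec, hμ, star_dotProduct_conjTranspose_mulVec_eq_zero hd]
  have hres : yhat - K *ᵥ y = (yhat - K *ᵥ y₀) + K *ᵥ (y₀ - y) := by
    rw [mulVec_sub, sub_add_sub_cancel]
  have hgram : star (K *ᵥ (y₀ - y)) ⬝ᵥ P *ᵥ K *ᵥ (y₀ - y) =
      star (y₀ - y) ⬝ᵥ (Kᴴ * P * K) *ᵥ (y₀ - y) := by
    rw [star_mulVec, ← dotProduct_mulVec, mulVec_mulVec, mulVec_mulVec, Matrix.mul_assoc]
  rw [glsCriterion, hres, star_add_dotProduct_mulVec_add hP horth, hgram, glsCriterion]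

end QuadraticForm

section CoherentCombination

variable {R m n u : Type*} [Fintype m] [Fintype n] [Fintype u] [DecidableEq n] [DecidableEq u]
  [CommRing R] [StarRing R]

/-- The projection `M = 1 - V Cᴴ (C V Cᴴ)⁻¹ C` onto the kernel of `C` along the range of `V Cᴴ`.
If `C V Cᴴ` is not invertible, its inverse is the junk value `0` and this matrix is `1`. -/
noncomputable def coherentProjection (V : Matrix n n R) (C : Matrix u n R) : Matrix n n R :=
  1 - V * Cᴴ * (C * V * Cᴴ)⁻¹ * C

/-- The unconstrained combination weights `Ω = P K (Kᴴ P K)⁻¹`: when `P` is Hermitian and `Kᴴ P K`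
is positive definite, `Ωᴴ ŷ` is the unconstrained minimizer of the criterion. -/
noncomputable def combinationWeights (P : Matrix m m R) (K : Matrix m n R) : Matrix m n R :=
  P * K * (Kᴴ * P * K)⁻¹

/-- The coherent forecast combination `ỹ = M Ωᴴ ŷ`, with `M` the coherent projection for
`W_c = (Kᴴ P K)⁻¹`. -/
noncomputable def coherentCombination (P : Matrix m m R) (K : Matrix m n R) (C : Matrix u n R)
    (yhat : m → R) : n → R :=
  (coherentProjection (Kᴴ * P * K)⁻¹ C * (combinationWeights P K)ᴴ) *ᵥ yhat

lemma mul_coherentProjection {V : Matrix n n R} {C : Matrix u n R} (h : IsUnit (C * V * Cᴴ)) :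
    C * coherentProjection V C = 0 := by
  calc C * coherentProjection V C = C - (C * V * Cᴴ) * (C * V * Cᴴ)⁻¹ * C := by
        simp only [coherentProjection, Matrix.mul_sub, Matrix.mul_one, Matrix.mul_assoc]
    _ = 0 := by
        rw [mul_nonsing_inv _ ((isUnit_iff_isUnit_det _).mp h), Matrix.one_mul, sub_self]

lemma mul_coherentProjection_inv {S : Matrix n n R} (hS : IsUnit S) (C : Matrix u n R) :
    S * coherentProjection S⁻¹ C = S - Cᴴ * ((C * S⁻¹ * Cᴴ)⁻¹ * C) := by
  calc S * coherentProjection S⁻¹ C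
      = S - S * S⁻¹ * (Cᴴ * ((C * S⁻¹ * Cᴴ)⁻¹ * C)) := by
        simp only [coherentProjection, Matrix.mul_sub, Matrix.mul_one, Matrix.mul_assoc]
    _ = S - Cᴴ * ((C * S⁻¹ * Cᴴ)⁻¹ * C) := by
        rw [mul_nonsing_inv _ ((isUnit_iff_isUnit_det _).mp hS), Matrix.one_mul]

lemma mul_conjTranspose_combinationWeights {P : Matrix m m R} (hP : P.IsHermitian)
    {K : Matrix m n R} (hS : IsUnit (Kᴴ * P * K)) :
    (Kᴴ * P * K) * (combinationWeights P K)ᴴ = Kᴴ * P := by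
  rw [combinationWeights, conjTranspose_mul, conjTranspose_mul, hP.eq,
    (isHermitian_conjTranspose_mul_mul K hP).inv.eq,
    mul_nonsing_inv_cancel_left _ _ ((isUnit_iff_isUnit_det _).mp hS)]

lemma mulVec_coherentCombination {P : Matrix m m R} {K : Matrix m n R} {C : Matrix u n R}
    (hC : IsUnit (C * (Kᴴ * P * K)⁻¹ * Cᴴ)) (yhat : m → R) :
    C *ᵥ coherentCombination P K C yhat = 0 := by
  rw [coherentCombination, mulVec_mulVec, ← Matrix.mul_assoc, mul_coherentProjection hC,
    Matrix.zero_mul, zero_mulVec]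

lemma exists_multiplier_coherentCombination {P : Matrix m m R} (hP : P.IsHermitian)
    {K : Matrix m n R} (hS : IsUnit (Kᴴ * P * K)) (C : Matrix u n R) (yhat : m → R) :
    ∃ μ : u → R, Kᴴ *ᵥ P *ᵥ (yhat - K *ᵥ coherentCombination P K C yhat) = Cᴴ *ᵥ μ := by
  let L := (C * (Kᴴ * P * K)⁻¹ * Cᴴ)⁻¹ * C * (combinationWeights P K)ᴴ
  have hgram : (Kᴴ * P * K) *ᵥ coherentCombination P K C yhat =
      (Kᴴ * P) *ᵥ yhat - Cᴴ *ᵥ L *ᵥ yhat := by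
    rw [coherentCombination, mulVec_mulVec, ← Matrix.mul_assoc, mul_coherentProjection_inv hS,
      Matrix.sub_mul, mul_conjTranspose_combinationWeights hP hS, sub_mulVec, Matrix.mul_assoc,
      mulVec_mulVec]
  refine ⟨L *ᵥ yhat, ?_⟩
  rw [mulVec_mulVec, mulVec_sub, mulVec_mulVec, hgram, sub_sub_cancel]

theorem occ_optimal_general [PartialOrder R] [IsOrderedAddMonoid R] {P : Matrix m m R}
    (hP : P.IsHermitian) {K : Matrix m n R} (hS : (Kᴴ * P * K).PosSemidef)
    (hSunit : IsUnit (Kᴴ * P * K)) {C : Matrix u n R} (hC : IsUnit (C * (Kᴴ * P * K)⁻¹ * Cᴴ))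
    (yhat : m → R) :
    C *ᵥ coherentCombination P K C yhat = 0 ∧
      ∀ y : n → R, C *ᵥ y = 0 →
        glsCriterion P K yhat (coherentCombination P K C yhat) ≤ glsCriterion P K yhat y := by
  have hcoh := mulVec_coherentCombination hC yhat
  refine ⟨hcoh, fun y hy ↦ ?_⟩
  obtain ⟨μ, hμ⟩ := exists_multiplier_coherentCombination hP hSunit C yhat
  rw [glsCriterion_eq_add_of_stationary hP hμ hcoh hy]
  exact le_add_of_nonneg_right (hS.dotProduct_mulVec_nonneg _)

end CoherentCombination

/-- Theorem 1: the coherent forecast combination ỹ = M Ωᵀ ŷ is coherent and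
minimizes the GLS criterion among all coherent vectors. -/
theorem occ_optimal {m n u : ℕ}
    (W : Matrix (Fin m) (Fin m) ℝ) (hW : W.PosDef)
    (K : Matrix (Fin m) (Fin n) ℝ) (hK : (Kᵀ * W⁻¹ * K).PosDef)
    (C : Matrix (Fin u) (Fin n) ℝ)
    (hC : (C * (Kᵀ * W⁻¹ * K)⁻¹ * Cᵀ).PosDef)
    (yhat : Fin m → ℝ) :
    let W_c : Matrix (Fin n) (Fin n) ℝ := (Kᵀ * W⁻¹ * K)⁻¹
    let Ω : Matrix (Fin m) (Fin n) ℝ := W⁻¹ * K * W_c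
    let M : Matrix (Fin n) (Fin n) ℝ := 1 - W_c * Cᵀ * (C * W_c * Cᵀ)⁻¹ * C
    let ytilde : Fin n → ℝ := (M * Ωᵀ).mulVec yhat
    C.mulVec ytilde = 0 ∧
      ∀ y : Fin n → ℝ, C.mulVec y = 0 →
        (yhat - K.mulVec ytilde) ⬝ᵥ W⁻¹.mulVec (yhat - K.mulVec ytilde) ≤
          (yhat - K.mulVec y) ⬝ᵥ W⁻¹.mulVec (yhat - K.mulVec y) := by
  simp only [← conjTranspose_eq_transpose_of_trivial] at hK hC ⊢
  -- `star` on real vectors is the identity by definition, so both criteria agree definitionally.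
  exact occ_optimal_general hW.inv.isHermitian hK.posSemidef hK.isUnit hC.isUnit yhat
end

section
/- (Algebraic unbiasedness of the coherent combination, Corollary 1 / Remark 2.) The coherent combination weight matrix Ψᵀ := M * Ωᵀ satisfies Ψᵀ * K = M, and consequently for every vector μ : Fin n → ℝ with C.mulVec μ = 0 one has (M * Ωᵀ * K).mulVec μ = μ; that is, the coherent combined forecast of any coherent mean vector equals that mean vector. -/
open Matrix

section

variable {R m n u : Type*} [CommRing R] [Fintype m] [Fintype n] [DecidableEq n] [Fintype u]

theorem transpose_mul_nonsing_inv_mul_eq_one {A K : Matrix m n R} (h : IsUnit (Kᵀ * A)) :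
    (A * (Kᵀ * A)⁻¹)ᵀ * K = 1 :=
  calc
    (A * (Kᵀ * A)⁻¹)ᵀ * K = (Kᵀ * A * (Kᵀ * A)⁻¹)ᵀ := by
      rw [Matrix.mul_assoc Kᵀ, transpose_mul Kᵀ, transpose_transpose]
    _ = 1 := by
      rw [mul_nonsing_inv _ ((isUnit_iff_isUnit_det _).mp h), transpose_one]

theorem one_sub_mul_mulVec_of_mulVec_eq_zero (B : Matrix n u R) {C : Matrix u n R} {μ : n → R}
    (hμ : C *ᵥ μ = 0) : (1 - B * C) *ᵥ μ = μ := by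
  rw [sub_mulVec, one_mulVec, ← mulVec_mulVec, hμ, mulVec_zero, sub_zero]

/-- In `occ_unbiased`, `G` is the precision matrix `W⁻¹` and `B` is the gain
`W_c * Cᵀ * (C * W_c * Cᵀ)⁻¹`. -/
theorem occ_unbiased_general (G : Matrix m m R) (K : Matrix m n R) (hK : IsUnit (Kᵀ * G * K))
    (B : Matrix n u R) (C : Matrix u n R) :
    let Ω : Matrix m n R := G * K * (Kᵀ * G * K)⁻¹
    let M : Matrix n n R := 1 - B * C
    M * Ωᵀ * K = M ∧ ∀ μ : n → R, C *ᵥ μ = 0 → (M * Ωᵀ * K) *ᵥ μ = μ := by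
  intro Ω M
  have hΩ : Ωᵀ * K = 1 := by
    simp only [Ω, Matrix.mul_assoc Kᵀ] at hK ⊢
    exact transpose_mul_nonsing_inv_mul_eq_one hK
  have hM : M * Ωᵀ * K = M := by rw [Matrix.mul_assoc, hΩ, Matrix.mul_one]
  refine ⟨hM, fun μ hμ => ?_⟩
  rw [hM]
  exact one_sub_mul_mulVec_of_mulVec_eq_zero B hμ

end

/-- Corollary 1 / Remark 2: Ψᵀ * K = M, and the coherent combined forecast of any
coherent mean vector equals that mean vector. -/
theorem occ_unbiased {m n u : ℕ}
    (W : Matrix (Fin m) (Fin m) ℝ) (hW : W.PosDef)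
    (K : Matrix (Fin m) (Fin n) ℝ) (hK : (Kᵀ * W⁻¹ * K).PosDef)
    (C : Matrix (Fin u) (Fin n) ℝ)
    (hC : (C * (Kᵀ * W⁻¹ * K)⁻¹ * Cᵀ).PosDef) :
    let W_c : Matrix (Fin n) (Fin n) ℝ := (Kᵀ * W⁻¹ * K)⁻¹
    let Ω : Matrix (Fin m) (Fin n) ℝ := W⁻¹ * K * W_c
    let M : Matrix (Fin n) (Fin n) ℝ := 1 - W_c * Cᵀ * (C * W_c * Cᵀ)⁻¹ * C
    (M * Ωᵀ) * K = M ∧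
      ∀ μ : Fin n → ℝ, C.mulVec μ = 0 → (M * Ωᵀ * K).mulVec μ = μ :=
  occ_unbiased_general W⁻¹ K hK.isUnit _ C
end

section
/- (Error covariance of the coherent combined forecast, Corollary 1, eq. (11).) One has M * W_c * Mᵀ = M * W_c, and consequently the coherent combination weight matrix Ψᵀ := M * Ωᵀ satisfies (M * Ωᵀ) * W * (M * Ωᵀ)ᵀ = M * W_c. In particular the matrix W̃_c := M * W_c is symmetric. -/
open Matrix

/-! `M` is a projection that annihilates `W_c * Cᵀ`, and `Mᵀ` differs from `1` by a matrix of the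
form `Cᵀ * X`; hence the right-hand factor `Mᵀ` in `M * W_c * Mᵀ` acts as the identity. The weights
are unbiased, `Ωᵀ * K = 1`, while `W * Ω = K * W_c`, so `Ωᵀ * W * Ω = W_c`. -/

section

variable {R ι κ μ : Type*} [Fintype ι]

theorem isSymm_transpose_mul_mul [NonUnitalCommSemiring R] {A : Matrix ι ι R} (hA : A.IsSymm)
    (B : Matrix ι κ R) : (Bᵀ * A * B).IsSymm := by
  rw [IsSymm, transpose_mul, transpose_mul, transpose_transpose, hA.eq, Matrix.mul_assoc]

variable [CommRing R] [DecidableEq ι] [Fintype κ] [DecidableEq κ]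

/-- The projection onto the solutions `x` of `C *ᵥ x = 0` along the column space of `V * Cᵀ`, which
imposes the constraints `C` on a vector with error covariance `V`. It is the matrix `M` when
`V = W_c`, and is meaningful only for invertible `C * V * Cᵀ`. -/
noncomputable def constraintProjection (V : Matrix ι ι R) (C : Matrix κ ι R) : Matrix ι ι R :=
  1 - V * Cᵀ * (C * V * Cᵀ)⁻¹ * C

theorem constraintProjection_mul_mul_transpose {V : Matrix ι ι R} {C : Matrix κ ι R}
    (hC : IsUnit (C * V * Cᵀ)) : constraintProjection V C * V * Cᵀ = 0 := by
  have hinv : (C * V * Cᵀ)⁻¹ * (C * V * Cᵀ) = 1 :=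
    nonsing_inv_mul _ ((isUnit_iff_isUnit_det _).mp hC)
  calc constraintProjection V C * V * Cᵀ
      = V * Cᵀ - V * Cᵀ * ((C * V * Cᵀ)⁻¹ * (C * V * Cᵀ)) := by
        simp only [constraintProjection, Matrix.sub_mul, Matrix.one_mul, Matrix.mul_assoc]
    _ = 0 := by rw [hinv, Matrix.mul_one, sub_self]

theorem constraintProjection_mul_mul_transpose_self {V : Matrix ι ι R} {C : Matrix κ ι R}
    (hC : IsUnit (C * V * Cᵀ)) :
    constraintProjection V C * V * (constraintProjection V C)ᵀ = constraintProjection V C * V := by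
  have htranspose : (constraintProjection V C)ᵀ = 1 - Cᵀ * (V * Cᵀ * (C * V * Cᵀ)⁻¹)ᵀ := by
    rw [constraintProjection, transpose_sub, transpose_one, transpose_mul _ C]
  rw [htranspose, Matrix.mul_sub, Matrix.mul_one, ← Matrix.mul_assoc,
    constraintProjection_mul_mul_transpose hC, Matrix.zero_mul, sub_zero]

theorem isSymm_constraintProjection_mul {V : Matrix ι ι R} (hV : V.IsSymm) (C : Matrix κ ι R) :
    (constraintProjection V C * V).IsSymm := by
  have hCV : (C * V * Cᵀ).IsSymm := by
    simpa only [transpose_transpose] using isSymm_transpose_mul_mul hV Cᵀ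
  have hsub : constraintProjection V C * V = V - (C * V)ᵀ * (C * V * Cᵀ)⁻¹ * (C * V) := by
    simp only [constraintProjection, transpose_mul, hV.eq, Matrix.sub_mul, Matrix.one_mul,
      Matrix.mul_assoc]
  rw [hsub]
  exact hV.sub (isSymm_transpose_mul_mul hCV.inv (C * V))

/-- The generalized least squares weights `Ω` for the design matrix `K` and the error covariance
`W`: an observation `y` yields the estimate `Ωᵀ *ᵥ y`. Meaningful only for invertible `W` and
`Kᵀ * W⁻¹ * K`. -/
noncomputable def glsWeights (W : Matrix ι ι R) (K : Matrix ι κ R) : Matrix ι κ R :=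
  W⁻¹ * K * (Kᵀ * W⁻¹ * K)⁻¹

theorem mul_glsWeights {W : Matrix ι ι R} (hW : IsUnit W) (K : Matrix ι κ R) :
    W * glsWeights W K = K * (Kᵀ * W⁻¹ * K)⁻¹ := by
  rw [glsWeights, Matrix.mul_assoc W⁻¹,
    mul_nonsing_inv_cancel_left _ _ ((isUnit_iff_isUnit_det _).mp hW)]

theorem transpose_glsWeights_mul {W : Matrix ι ι R} {K : Matrix ι κ R}
    (hK : IsUnit (Kᵀ * W⁻¹ * K)) : (glsWeights W K)ᵀ * K = 1 := by
  have hdual : Kᵀ * glsWeights W K = 1 := by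
    rw [glsWeights, ← Matrix.mul_assoc, ← Matrix.mul_assoc,
      mul_nonsing_inv _ ((isUnit_iff_isUnit_det _).mp hK)]
  simpa only [transpose_mul, transpose_transpose, transpose_one] using congrArg transpose hdual

theorem transpose_glsWeights_mul_mul_self {W : Matrix ι ι R} {K : Matrix ι κ R}
    (hW : IsUnit W) (hK : IsUnit (Kᵀ * W⁻¹ * K)) :
    (glsWeights W K)ᵀ * W * glsWeights W K = (Kᵀ * W⁻¹ * K)⁻¹ := by
  rw [Matrix.mul_assoc, mul_glsWeights hW, ← Matrix.mul_assoc, transpose_glsWeights_mul hK,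
    Matrix.one_mul]

theorem occ_coherent_covariance_general [Fintype μ] [DecidableEq μ]
    {W : Matrix ι ι R} (hW_symm : W.IsSymm) (hW : IsUnit W)
    {K : Matrix ι κ R} (hK : IsUnit (Kᵀ * W⁻¹ * K))
    {C : Matrix μ κ R} (hC : IsUnit (C * (Kᵀ * W⁻¹ * K)⁻¹ * Cᵀ)) :
    let W_c : Matrix κ κ R := (Kᵀ * W⁻¹ * K)⁻¹
    let Ω : Matrix ι κ R := W⁻¹ * K * W_c
    let M : Matrix κ κ R := 1 - W_c * Cᵀ * (C * W_c * Cᵀ)⁻¹ * C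
    M * W_c * Mᵀ = M * W_c ∧
      (M * Ωᵀ) * W * (M * Ωᵀ)ᵀ = M * W_c ∧
      (M * W_c).IsSymm := by
  intro W_c Ω M
  have hproj : M * W_c * Mᵀ = M * W_c := constraintProjection_mul_mul_transpose_self hC
  have hgls : Ωᵀ * W * Ω = W_c := transpose_glsWeights_mul_mul_self hW hK
  have hW_c : W_c.IsSymm := (isSymm_transpose_mul_mul hW_symm.inv K).inv
  refine ⟨hproj, ?_, isSymm_constraintProjection_mul hW_c C⟩
  calc (M * Ωᵀ) * W * (M * Ωᵀ)ᵀ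
      = M * (Ωᵀ * W * Ω) * Mᵀ := by
        simp only [transpose_mul M, transpose_transpose, Matrix.mul_assoc]
    _ = M * W_c := by rw [hgls, hproj]

end

/-- Corollary 1, eq. (11): error covariance of the coherent combined forecast,
M * W_c * Mᵀ = M * W_c; hence (M Ωᵀ) W (M Ωᵀ)ᵀ = M W_c and M W_c is symmetric. -/
theorem occ_coherent_covariance {m n u : ℕ}
    (W : Matrix (Fin m) (Fin m) ℝ) (hW : W.PosDef)
    (K : Matrix (Fin m) (Fin n) ℝ) (hK : (Kᵀ * W⁻¹ * K).PosDef)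
    (C : Matrix (Fin u) (Fin n) ℝ)
    (hC : (C * (Kᵀ * W⁻¹ * K)⁻¹ * Cᵀ).PosDef) :
    let W_c : Matrix (Fin n) (Fin n) ℝ := (Kᵀ * W⁻¹ * K)⁻¹
    let Ω : Matrix (Fin m) (Fin n) ℝ := W⁻¹ * K * W_c
    let M : Matrix (Fin n) (Fin n) ℝ := 1 - W_c * Cᵀ * (C * W_c * Cᵀ)⁻¹ * C
    M * W_c * Mᵀ = M * W_c ∧
      (M * Ωᵀ) * W * (M * Ωᵀ)ᵀ = M * W_c ∧
      (M * W_c).IsSymm :=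
  occ_coherent_covariance_general (isHermitian_iff_isSymm.mp hW.isHermitian) hW.isUnit hK.isUnit
    hC.isUnit
end

section
/- (Reconciliation never worsens the combined forecast, eq. (21).) The difference W_c - M * W_c equals W_c * Cᵀ * (C * W_c * Cᵀ)⁻¹ * C * W_c, and this matrix is positive semidefinite; hence W̃_c := M * W_c satisfies W̃_c ⪯ W_c in the Loewner order. -/
open Matrix

section Reconciliation

variable {𝕜 n u : Type*} [Fintype n] [DecidableEq n] [Fintype u] [DecidableEq u]

/-- The projection onto the kernel of the constraints `C` along the range of `P * Cᴴ`, which sends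
a forecast with error covariance `P` to its reconciled forecast; it is the paper's `M` when `P` is
`W_c`. If `C * P * Cᴴ` is not invertible, the inverse has junk value `0` and this is `1`. -/
noncomputable def reconciliationMatrix [CommRing 𝕜] [StarRing 𝕜]
    (P : Matrix n n 𝕜) (C : Matrix u n 𝕜) : Matrix n n 𝕜 :=
  1 - P * Cᴴ * (C * P * Cᴴ)⁻¹ * C

theorem sub_reconciliationMatrix_mul_self [CommRing 𝕜] [StarRing 𝕜]
    (P : Matrix n n 𝕜) (C : Matrix u n 𝕜) :
    P - reconciliationMatrix P C * P = P * Cᴴ * (C * P * Cᴴ)⁻¹ * C * P := by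
  rw [reconciliationMatrix, Matrix.sub_mul, Matrix.one_mul, sub_sub_cancel]

variable [Field 𝕜] [PartialOrder 𝕜] [StarRing 𝕜]

theorem posSemidef_sub_reconciliationMatrix_mul_self {P : Matrix n n 𝕜} {C : Matrix u n 𝕜}
    (hP : P.IsHermitian) (hC : (C * P * Cᴴ).PosDef) :
    (P - reconciliationMatrix P C * P).PosSemidef := by
  have sub_eq_congruence :
      P - reconciliationMatrix P C * P = (C * P)ᴴ * (C * P * Cᴴ)⁻¹ * (C * P) := by
    rw [sub_reconciliationMatrix_mul_self, conjTranspose_mul, hP.eq, ← Matrix.mul_assoc]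
  rw [sub_eq_congruence]
  exact hC.inv.posSemidef.conjTranspose_mul_mul_same (C * P)

theorem occ_reconciliation_improves_general {P : Matrix n n 𝕜} {C : Matrix u n 𝕜}
    (hP : P.IsHermitian) (hC : (C * P * Cᴴ).PosDef) :
    P - reconciliationMatrix P C * P = P * Cᴴ * (C * P * Cᴴ)⁻¹ * C * P ∧
      (P - reconciliationMatrix P C * P).PosSemidef :=
  ⟨sub_reconciliationMatrix_mul_self P C, posSemidef_sub_reconciliationMatrix_mul_self hP hC⟩

end Reconciliation

/-- Eq. (21): reconciliation never worsens the combined forecast: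
W_c - M * W_c = W_c Cᵀ (C W_c Cᵀ)⁻¹ C W_c is positive semidefinite, so M W_c ⪯ W_c. -/
theorem occ_reconciliation_improves {m n u : ℕ}
    (W : Matrix (Fin m) (Fin m) ℝ) (hW : W.PosDef)
    (K : Matrix (Fin m) (Fin n) ℝ) (hK : (Kᵀ * W⁻¹ * K).PosDef)
    (C : Matrix (Fin u) (Fin n) ℝ)
    (hC : (C * (Kᵀ * W⁻¹ * K)⁻¹ * Cᵀ).PosDef) :
    let W_c : Matrix (Fin n) (Fin n) ℝ := (Kᵀ * W⁻¹ * K)⁻¹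
    let M : Matrix (Fin n) (Fin n) ℝ := 1 - W_c * Cᵀ * (C * W_c * Cᵀ)⁻¹ * C
    W_c - M * W_c = W_c * Cᵀ * (C * W_c * Cᵀ)⁻¹ * C * W_c ∧
      (W_c - M * W_c).PosSemidef := by
  rw [← conjTranspose_eq_transpose_of_trivial C] at hC ⊢
  exact occ_reconciliation_improves_general hK.inv.isHermitian hC
end

section
/- (Matrix Schwarz inequality for the combined covariance, eq. (18)/(20).) Let q : ℕ, E : Matrix (Fin m) (Fin q) ℝ and L : Matrix (Fin q) (Fin n) ℝ satisfy Kᵀ * E = Lᵀ. Then Eᵀ * W * E - L * W_c * Lᵀ is positive semidefinite, i.e. L * W_c * Lᵀ ⪯ Eᵀ * W * E. (Taking E to be the columns of K corresponding to the j-th expert, so that Eᵀ * W * E = W_j and L = L_j is the expert's selection matrix, this yields L_j * W_c * L_jᵀ ⪯ W_j.) -/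
open Matrix

/-!
The block matrix `[W⁻¹ 1; 1 W]` is positive semidefinite, because its Schur complement
`W⁻¹ - 1 * W⁻¹ * 1` vanishes. Congruence by `diag(K, E)` turns it into
`[Kᴴ * W⁻¹ * K, Kᴴ * E; Eᴴ * K, Eᴴ * W * E]`, and the Schur complement of the upper left block
here is the difference to be shown positive semidefinite.
-/

section

variable {m n p q : Type*} [Fintype m] [Finite q]

theorem posSemidef_fromBlocks_conjTranspose_mul_mul [Finite n] [Fintype p]
    {R : Type*} [Ring R] [PartialOrder R] [StarRing R]
    {A : Matrix m m R} {B : Matrix m p R} {C : Matrix p m R} {D : Matrix p p R}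
    (h : (fromBlocks A B C D).PosSemidef) (X : Matrix m n R) (Y : Matrix p q R) :
    (fromBlocks (Xᴴ * A * X) (Xᴴ * B * Y) (Yᴴ * C * X) (Yᴴ * D * Y)).PosSemidef := by
  simpa [fromBlocks_conjTranspose, fromBlocks_multiply] using
    h.conjTranspose_mul_mul_same (fromBlocks X 0 0 Y)

variable {𝕜 : Type*} [Field 𝕜] [PartialOrder 𝕜] [StarRing 𝕜] [StarOrderedRing 𝕜]
  [DecidableEq m] {W : Matrix m m 𝕜}

theorem posSemidef_fromBlocks_inv_one_one_self (hW : W.PosDef) :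
    (fromBlocks W⁻¹ 1 1 W).PosSemidef := by
  let _ : Invertible W := hW.isUnit.invertible
  have hschur : (W⁻¹ - 1 * W⁻¹ * 1ᴴ).PosSemidef := by simp [PosSemidef.zero]
  simpa only [conjTranspose_one] using (hW.fromBlocks₂₂ W⁻¹ 1).2 hschur

theorem occ_schwarz_general [Fintype n] [DecidableEq n] (hW : W.PosDef) {K : Matrix m n 𝕜}
    (hK : (Kᴴ * W⁻¹ * K).PosDef) {E : Matrix m q 𝕜} {L : Matrix q n 𝕜} (hEL : Kᴴ * E = Lᴴ) :
    (Eᴴ * W * E - L * (Kᴴ * W⁻¹ * K)⁻¹ * Lᴴ).PosSemidef := by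
  have hEK : Eᴴ * K = L := by simpa using congrArg conjTranspose hEL
  have hblocks : (fromBlocks (Kᴴ * W⁻¹ * K) Lᴴ Lᴴᴴ (Eᴴ * W * E)).PosSemidef := by
    simpa [hEL, hEK] using
      posSemidef_fromBlocks_conjTranspose_mul_mul (posSemidef_fromBlocks_inv_one_one_self hW) K E
  let _ : Invertible (Kᴴ * W⁻¹ * K) := hK.isUnit.invertible
  simpa only [conjTranspose_conjTranspose] using (hK.fromBlocks₁₁ Lᴴ (Eᴴ * W * E)).1 hblocks

end

/-- Eq. (18)/(20): matrix Schwarz inequality for the combined covariance: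
if Kᵀ E = Lᵀ then L W_c Lᵀ ⪯ Eᵀ W E. -/
theorem occ_schwarz {m n q : ℕ}
    (W : Matrix (Fin m) (Fin m) ℝ) (hW : W.PosDef)
    (K : Matrix (Fin m) (Fin n) ℝ) (hK : (Kᵀ * W⁻¹ * K).PosDef)
    (E : Matrix (Fin m) (Fin q) ℝ) (L : Matrix (Fin q) (Fin n) ℝ)
    (hEL : Kᵀ * E = Lᵀ) :
    let W_c : Matrix (Fin n) (Fin n) ℝ := (Kᵀ * W⁻¹ * K)⁻¹
    (Eᵀ * W * E - L * W_c * Lᵀ).PosSemidef := by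
  simp only [← conjTranspose_eq_transpose_of_trivial] at hK hEL ⊢
  exact occ_schwarz_general hW hK hEL
end

section
/- (Corollary D.3, covariance identity for the structural approach.) The error covariance of the structural coherent combined forecast satisfies S * G * W * Gᵀ * Sᵀ = S * (Sᵀ * (Kᵀ * W⁻¹ * K) * S)⁻¹ * Sᵀ. -/
open Matrix

/-! With the combined design matrix `X = K * S`, the structural `G` is the generalized least squares
estimator `(Xᵀ W⁻¹ X)⁻¹ Xᵀ W⁻¹`. It is unbiased, `G X = 1`, and `G W = (Xᵀ W⁻¹ X)⁻¹ Xᵀ`, whence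
`G W Gᵀ = (Xᵀ W⁻¹ X)⁻¹ (G X)ᵀ = (Xᵀ W⁻¹ X)⁻¹`. -/

section GLS

variable {ι κ R : Type*} [Fintype ι] [DecidableEq ι] [Fintype κ] [DecidableEq κ] [CommRing R]

/-- The matrix of the generalized least squares estimator of `β` from observations `y = X β + ε`
with error covariance `W`. The inverses are Mathlib's total ones, so the definition is meaningful
only when `W` and `Xᵀ * W⁻¹ * X` are invertible. -/
noncomputable def glsEstimator (W : Matrix ι ι R) (X : Matrix ι κ R) : Matrix κ ι R :=
  (Xᵀ * W⁻¹ * X)⁻¹ * Xᵀ * W⁻¹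

theorem glsEstimator_mul_design {W : Matrix ι ι R} {X : Matrix ι κ R}
    (hX : IsUnit (Xᵀ * W⁻¹ * X)) : glsEstimator W X * X = 1 := by
  simpa only [glsEstimator, Matrix.mul_assoc] using
    nonsing_inv_mul _ ((isUnit_iff_isUnit_det _).mp hX)

theorem glsEstimator_mul_cov {W : Matrix ι ι R} (hW : IsUnit W) (X : Matrix ι κ R) :
    glsEstimator W X * W = (Xᵀ * W⁻¹ * X)⁻¹ * Xᵀ :=
  nonsing_inv_mul_cancel_right _ _ ((isUnit_iff_isUnit_det _).mp hW)

theorem glsEstimator_mul_cov_mul_transpose {W : Matrix ι ι R} (hW : IsUnit W) {X : Matrix ι κ R}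
    (hX : IsUnit (Xᵀ * W⁻¹ * X)) :
    glsEstimator W X * W * (glsEstimator W X)ᵀ = (Xᵀ * W⁻¹ * X)⁻¹ :=
  calc glsEstimator W X * W * (glsEstimator W X)ᵀ
      = (Xᵀ * W⁻¹ * X)⁻¹ * (glsEstimator W X * X)ᵀ := by
        rw [glsEstimator_mul_cov hW, transpose_mul, Matrix.mul_assoc]
    _ = (Xᵀ * W⁻¹ * X)⁻¹ := by
        rw [glsEstimator_mul_design hX, transpose_one, Matrix.mul_one]

end GLS

theorem structural_covariance_general {m n b R : Type*} [Fintype m] [DecidableEq m] [Fintype n]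
    [Fintype b] [DecidableEq b] [CommRing R] {W : Matrix m m R} (hW : IsUnit W)
    (K : Matrix m n R) (S : Matrix n b R) (hS : IsUnit (Sᵀ * (Kᵀ * W⁻¹ * K) * S)) :
    let G : Matrix b m R := (Sᵀ * (Kᵀ * W⁻¹ * K) * S)⁻¹ * Sᵀ * Kᵀ * W⁻¹
    S * G * W * Gᵀ * Sᵀ = S * (Sᵀ * (Kᵀ * W⁻¹ * K) * S)⁻¹ * Sᵀ := by
  intro G
  have normal_matrix : (K * S)ᵀ * W⁻¹ * (K * S) = Sᵀ * (Kᵀ * W⁻¹ * K) * S := by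
    simp only [transpose_mul, Matrix.mul_assoc]
  have G_eq : G = glsEstimator W (K * S) := by
    rw [glsEstimator, normal_matrix, transpose_mul, ← Matrix.mul_assoc]
  have cov : G * W * Gᵀ = (Sᵀ * (Kᵀ * W⁻¹ * K) * S)⁻¹ := by
    rw [← normal_matrix] at hS ⊢
    rw [G_eq, glsEstimator_mul_cov_mul_transpose hW hS]
  rw [← cov]
  simp only [Matrix.mul_assoc]

/-- Corollary D.3: covariance identity for the structural approach,
S G W Gᵀ Sᵀ = S (Sᵀ (Kᵀ W⁻¹ K) S)⁻¹ Sᵀ. -/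
theorem structural_covariance {m n b : ℕ}
    (W : Matrix (Fin m) (Fin m) ℝ) (hW : W.PosDef)
    (K : Matrix (Fin m) (Fin n) ℝ) (hK : (Kᵀ * W⁻¹ * K).PosDef)
    (S : Matrix (Fin n) (Fin b) ℝ)
    (hS : (Sᵀ * (Kᵀ * W⁻¹ * K) * S).PosDef) :
    let G : Matrix (Fin b) (Fin m) ℝ :=
      (Sᵀ * (Kᵀ * W⁻¹ * K) * S)⁻¹ * Sᵀ * Kᵀ * W⁻¹
    S * G * W * Gᵀ * Sᵀ = S * (Sᵀ * (Kᵀ * W⁻¹ * K) * S)⁻¹ * Sᵀ :=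
  structural_covariance_general hW.isUnit K S hS.isUnit
end

section
/- (Corollary D.3, eq. (D.9): Schwarz inequality for the structural covariance.) Let q : ℕ, E : Matrix (Fin m) (Fin q) ℝ and L : Matrix (Fin q) (Fin n) ℝ satisfy Kᵀ * E = Lᵀ. Then Eᵀ * W * E - L * S * (Sᵀ * (Kᵀ * W⁻¹ * K) * S)⁻¹ * Sᵀ * Lᵀ is positive semidefinite; i.e., with W̃_c := S * (Sᵀ * (Kᵀ * W⁻¹ * K) * S)⁻¹ * Sᵀ, one has L * W̃_c * Lᵀ ⪯ Eᵀ * W * E. -/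
open Matrix

/-
The columns of `X` and `Y` together have a positive semidefinite Gram matrix with respect to a
positive semidefinite `A`, so the Schur complement `Yᴴ A Y - (Yᴴ A X) (Xᴴ A X)⁻¹ (Xᴴ A Y)` is
positive semidefinite. For `A = W⁻¹`, `X = K S` and `Y = W E`, the cross term `Xᴴ A Y` is
`Sᴴ Kᴴ E = Sᴴ Lᴴ`.
-/

section GramMatrix

variable {m n p R : Type*} [Fintype m] [Finite p]

theorem posSemidef_fromBlocks_gram [Finite n] [Ring R] [PartialOrder R] [StarRing R]
    {A : Matrix m m R} (hA : A.PosSemidef) (X : Matrix m n R) (Y : Matrix m p R) :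
    (fromBlocks (Xᴴ * A * X) (Xᴴ * A * Y) (Yᴴ * A * X) (Yᴴ * A * Y)).PosSemidef := by
  simpa only [conjTranspose_fromCols_eq_fromRows_conjTranspose, fromRows_mul, mul_fromCols,
    fromCols_fromRows_eq_fromBlocks] using hA.conjTranspose_mul_mul_same (fromCols X Y)

theorem posSemidef_gram_schurComplement [Fintype n] [DecidableEq n] [Field R] [PartialOrder R]
    [StarRing R] [StarOrderedRing R] {A : Matrix m m R} (hA : A.PosSemidef) {X : Matrix m n R}
    (hX : (Xᴴ * A * X).PosDef) (Y : Matrix m p R) :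
    (Yᴴ * A * Y - Yᴴ * A * X * (Xᴴ * A * X)⁻¹ * (Xᴴ * A * Y)).PosSemidef := by
  have conj_cross : (Xᴴ * A * Y)ᴴ = Yᴴ * A * X := by
    simp only [conjTranspose_mul, conjTranspose_conjTranspose, hA.isHermitian.eq, Matrix.mul_assoc]
  have := hX.isUnit.invertible
  rw [← conj_cross, ← hX.fromBlocks₁₁, conj_cross]
  exact posSemidef_fromBlocks_gram hA X Y

end GramMatrix

section StructuralCovariance

variable {m n b q 𝕜 : Type*} [Fintype m] [DecidableEq m] [Fintype n]
  [Fintype b] [DecidableEq b] [Finite q]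
  [Field 𝕜] [PartialOrder 𝕜] [StarRing 𝕜] [StarOrderedRing 𝕜]

theorem posSemidef_sub_mul_inv_gram_mul {W : Matrix m m 𝕜} (hW : W.PosDef) {X : Matrix m b 𝕜}
    (hX : (Xᴴ * W⁻¹ * X).PosDef) (E : Matrix m q 𝕜) :
    (Eᴴ * W * E - Eᴴ * X * (Xᴴ * W⁻¹ * X)⁻¹ * (Xᴴ * E)).PosSemidef := by
  have hdet : IsUnit W.det := (isUnit_iff_isUnit_det W).1 hW.isUnit
  simpa only [conjTranspose_mul, hW.isHermitian.eq, Matrix.mul_assoc,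
    mul_nonsing_inv_cancel_left _ _ hdet, nonsing_inv_mul_cancel_left _ _ hdet]
    using posSemidef_gram_schurComplement hW.inv.posSemidef hX (W * E)

theorem structural_schwarz_general (W : Matrix m m 𝕜) (hW : W.PosDef) (K : Matrix m n 𝕜)
    (S : Matrix n b 𝕜) (hS : (Sᴴ * (Kᴴ * W⁻¹ * K) * S).PosDef)
    (E : Matrix m q 𝕜) (L : Matrix q n 𝕜) (hEL : Kᴴ * E = Lᴴ) :
    (Eᴴ * W * E - L * S * (Sᴴ * (Kᴴ * W⁻¹ * K) * S)⁻¹ * Sᴴ * Lᴴ).PosSemidef := by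
  have gram : Sᴴ * (Kᴴ * W⁻¹ * K) * S = (K * S)ᴴ * W⁻¹ * (K * S) := by
    simp only [conjTranspose_mul, Matrix.mul_assoc]
  have right_factor : Sᴴ * Lᴴ = (K * S)ᴴ * E := by
    rw [← hEL, conjTranspose_mul, Matrix.mul_assoc]
  have left_factor : L * S = Eᴴ * (K * S) := by
    simpa only [conjTranspose_mul, conjTranspose_conjTranspose]
      using congrArg conjTranspose right_factor
  rw [gram] at hS ⊢
  rw [Matrix.mul_assoc _ Sᴴ Lᴴ, left_factor, right_factor]
  exact posSemidef_sub_mul_inv_gram_mul hW hS E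

end StructuralCovariance

/-- Corollary D.3, eq. (D.9): Schwarz inequality for the structural covariance:
if Kᵀ E = Lᵀ then L W̃_c Lᵀ ⪯ Eᵀ W E with W̃_c = S (Sᵀ (Kᵀ W⁻¹ K) S)⁻¹ Sᵀ. -/
theorem structural_schwarz {m n b q : ℕ}
    (W : Matrix (Fin m) (Fin m) ℝ) (hW : W.PosDef)
    (K : Matrix (Fin m) (Fin n) ℝ) (hK : (Kᵀ * W⁻¹ * K).PosDef)
    (S : Matrix (Fin n) (Fin b) ℝ)
    (hS : (Sᵀ * (Kᵀ * W⁻¹ * K) * S).PosDef)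
    (E : Matrix (Fin m) (Fin q) ℝ) (L : Matrix (Fin q) (Fin n) ℝ)
    (hEL : Kᵀ * E = Lᵀ) :
    (Eᵀ * W * E -
      L * S * (Sᵀ * (Kᵀ * W⁻¹ * K) * S)⁻¹ * Sᵀ * Lᵀ).PosSemidef := by
  simp only [← conjTranspose_eq_transpose_of_trivial] at hS hEL ⊢
  exact structural_schwarz_general W hW K S hS E L hEL
end

section
/- (Equivalence of the zero-constrained and structural approaches, Appendix D.) Assume in addition that C * S = 0, that C has rank u (Matrix.rank C = u), that S has rank b (Matrix.rank S = b), and that u + b = n. Then M * W_c = S * (Sᵀ * (Kᵀ * W⁻¹ * K) * S)⁻¹ * Sᵀ, and consequently M * Ωᵀ = S * G, so the zero-constrained coherent combined forecast M * Ωᵀ * ŷ coincides with the structural one S * G * ŷ for every ŷ. -/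
open Matrix

/-!
With `A = Kᵀ * W⁻¹ * K`, the matrix `M` is complementary to the oblique projection onto the columns
of `A⁻¹ * Cᵀ` along `ker C`. The projection onto the columns of `S` along `ker (Sᵀ * A)` is exactly
this complement: the orthogonality relations `C * S = 0` and `(Sᵀ * A) * (A⁻¹ * Cᵀ) = (C * S)ᵀ = 0`
make the two projections annihilate each other, and `u + b = n` makes them sum to the identity.
Multiplying by `A⁻¹` on the right gives the formula for `M * W_c`.
-/

section ObliqueProjection

variable {R n u b : Type*} [CommRing R] [Fintype n] [DecidableEq n]
  [Fintype u] [DecidableEq u] [Fintype b] [DecidableEq b]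

/-- The oblique projection onto the column space of `X` along the kernel of `Y`. It has this meaning
when `Y * X` is invertible; otherwise the inverse, and with it the whole product, is zero. -/
noncomputable def obliqueProjection (X : Matrix n u R) (Y : Matrix u n R) : Matrix n n R :=
  X * (Y * X)⁻¹ * Y

theorem obliqueProjection_add_obliqueProjection_eq_one
    {X₁ : Matrix n u R} {Y₁ : Matrix u n R} {X₂ : Matrix n b R} {Y₂ : Matrix b n R}
    (e : n ≃ u ⊕ b) (h₁ : IsUnit (Y₁ * X₁)) (h₂ : IsUnit (Y₂ * X₂))
    (h₁₂ : Y₁ * X₂ = 0) (h₂₁ : Y₂ * X₁ = 0) :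
    obliqueProjection X₁ Y₁ + obliqueProjection X₂ Y₂ = 1 := by
  have hdual : fromRows ((Y₁ * X₁)⁻¹ * Y₁) ((Y₂ * X₂)⁻¹ * Y₂) * fromCols X₁ X₂ = 1 := by
    rw [isUnit_iff_isUnit_det] at h₁ h₂
    rw [fromRows_mul_fromCols, ← fromBlocks_one]
    simp only [Matrix.mul_assoc, h₁₂, h₂₁, Matrix.mul_zero, nonsing_inv_mul _ h₁,
      nonsing_inv_mul _ h₂]
  rw [← fromCols_mul_fromRows_eq_one_comm e, fromCols_mul_fromRows] at hdual
  simpa only [obliqueProjection, Matrix.mul_assoc] using hdual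

theorem one_sub_obliqueProjection_mul_inv
    {A : Matrix n n R} {C : Matrix u n R} {D : Matrix n u R} {S : Matrix n b R} {T : Matrix b n R}
    (e : n ≃ u ⊕ b) (hA : IsUnit A) (hCD : IsUnit (C * A⁻¹ * D)) (hTS : IsUnit (T * A * S))
    (hCS : C * S = 0) (hTD : T * D = 0) :
    (1 - obliqueProjection (A⁻¹ * D) C) * A⁻¹ = S * (T * A * S)⁻¹ * T := by
  rw [isUnit_iff_isUnit_det] at hA
  have horth : T * A * (A⁻¹ * D) = 0 := by
    rw [Matrix.mul_assoc, mul_nonsing_inv_cancel_left _ _ hA, hTD]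
  have hsum : obliqueProjection (A⁻¹ * D) C + obliqueProjection S (T * A) = 1 :=
    obliqueProjection_add_obliqueProjection_eq_one e (by rwa [← Matrix.mul_assoc]) hTS hCS horth
  calc (1 - obliqueProjection (A⁻¹ * D) C) * A⁻¹
      = obliqueProjection S (T * A) * A⁻¹ := by rw [← hsum, add_sub_cancel_left]
    _ = S * (T * A * S)⁻¹ * T := by
      rw [obliqueProjection, ← Matrix.mul_assoc, mul_nonsing_inv_cancel_right _ _ hA]

end ObliqueProjection

theorem occ_structural_equivalence_general {R m n u b : Type*} [CommRing R] [Fintype m]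
    [Fintype n] [DecidableEq n] [Fintype u] [DecidableEq u] [Fintype b] [DecidableEq b]
    (P : Matrix m m R) (hP : P.IsSymm)
    (K : Matrix m n R) (hK : IsUnit (Kᵀ * P * K))
    (C : Matrix u n R) (hC : IsUnit (C * (Kᵀ * P * K)⁻¹ * Cᵀ))
    (S : Matrix n b R) (hS : IsUnit (Sᵀ * (Kᵀ * P * K) * S))
    (hCS : C * S = 0) (e : n ≃ u ⊕ b) :
    let W_c : Matrix n n R := (Kᵀ * P * K)⁻¹
    let Ω : Matrix m n R := P * K * W_c
    let M : Matrix n n R := 1 - W_c * Cᵀ * (C * W_c * Cᵀ)⁻¹ * C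
    let G : Matrix b m R := (Sᵀ * (Kᵀ * P * K) * S)⁻¹ * Sᵀ * Kᵀ * P
    M * W_c = S * (Sᵀ * (Kᵀ * P * K) * S)⁻¹ * Sᵀ ∧
      M * Ωᵀ = S * G ∧
      ∀ y : m → R, (M * Ωᵀ).mulVec y = (S * G).mulVec y := by
  intro W_c Ω M G
  have hM : M = 1 - obliqueProjection (W_c * Cᵀ) C := by
    simp only [M, obliqueProjection, Matrix.mul_assoc]
  have hSC : Sᵀ * Cᵀ = 0 := by rw [← transpose_mul, hCS, transpose_zero]
  have hMW : M * W_c = S * (Sᵀ * (Kᵀ * P * K) * S)⁻¹ * Sᵀ :=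
    hM ▸ one_sub_obliqueProjection_mul_inv e hK hC hS hCS hSC
  have hW_c : W_c.IsSymm := by
    refine IsSymm.inv ?_
    simp only [IsSymm, transpose_mul, transpose_transpose, hP.eq, Matrix.mul_assoc]
  have hΩ : Ωᵀ = W_c * (Kᵀ * P) := by
    simp only [Ω, transpose_mul, hP.eq, hW_c.eq]
  have hMΩ : M * Ωᵀ = S * G := by
    rw [hΩ, ← Matrix.mul_assoc, hMW]
    simp only [G, Matrix.mul_assoc]
  exact ⟨hMW, hMΩ, fun y => congrArg (·.mulVec y) hMΩ⟩

/-- Appendix D: equivalence of the zero-constrained and structural approaches. -/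
theorem occ_structural_equivalence {m n u b : ℕ}
    (W : Matrix (Fin m) (Fin m) ℝ) (hW : W.PosDef)
    (K : Matrix (Fin m) (Fin n) ℝ) (hK : (Kᵀ * W⁻¹ * K).PosDef)
    (C : Matrix (Fin u) (Fin n) ℝ)
    (hC : (C * (Kᵀ * W⁻¹ * K)⁻¹ * Cᵀ).PosDef)
    (S : Matrix (Fin n) (Fin b) ℝ)
    (hS : (Sᵀ * (Kᵀ * W⁻¹ * K) * S).PosDef)
    (hCS : C * S = 0) (hrkC : C.rank = u) (hrkS : S.rank = b)
    (hub : u + b = n) :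
    let W_c : Matrix (Fin n) (Fin n) ℝ := (Kᵀ * W⁻¹ * K)⁻¹
    let Ω : Matrix (Fin m) (Fin n) ℝ := W⁻¹ * K * W_c
    let M : Matrix (Fin n) (Fin n) ℝ := 1 - W_c * Cᵀ * (C * W_c * Cᵀ)⁻¹ * C
    let G : Matrix (Fin b) (Fin m) ℝ :=
      (Sᵀ * (Kᵀ * W⁻¹ * K) * S)⁻¹ * Sᵀ * Kᵀ * W⁻¹
    M * W_c = S * (Sᵀ * (Kᵀ * W⁻¹ * K) * S)⁻¹ * Sᵀ ∧
      M * Ωᵀ = S * G ∧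
      ∀ yhat : Fin m → ℝ, (M * Ωᵀ).mulVec yhat = (S * G).mulVec yhat := by
  have hsymm : W⁻¹.IsSymm := isHermitian_iff_isSymm.mp hW.inv.isHermitian
  exact occ_structural_equivalence_general W⁻¹ hsymm K hK.isUnit C hC.isUnit S hS.isUnit hCS
    ((finCongr hub.symm).trans finSumFinEquiv.symm)
end
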